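/- Let Φ : G → Aut(H) be a semi-trivial action of a brace (G,·_G,∘_G) on a brace (H,·_H,∘_H), and let B : H → G be a map. Then B is a relative Rota-Baxter operator on G with respect to Φ if and only if its graph Gr(B) = {(h, B(h)) | h ∈ H} is a sub-brace of the semi-direct product brace H ⋊_Φ G (i.e. a subset closed under both multiplications and under both inversions, containing the unit). -/

import Mathlib

/-!
Each of the two Rota-Baxter identities says that `B` is a relative Rota-Baxter operator between two
groups: for the `∘`-groups with respect to `Φ`, and for the `·`-groups with respect to the trivial
action, where this means that `B` is a homomorphism. For groups, the identity is closure of the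
graph under the product of `H ⋊[φ] G`, so that only the unit and the inverses are at stake. The
identity at `h = k = 1` reads `B 1 * B 1 = B 1`, hence `B 1 = 1`; its instance with
`φ (B h) k = h⁻¹` then reads `B h * B k = B 1 = 1`, hence `B k = (B h)⁻¹`.
-/

structure IsGroup {G : Type*} (op : G → G → G) (e : G) (inv : G → G) : Prop where
  assoc : ∀ a b c, op (op a b) c = op a (op b c)
  one_op : ∀ a, op e a = a
  op_one : ∀ a, op a e = a
  inv_op : ∀ a, op (inv a) a = e
  op_inv : ∀ a, op a (inv a) = e

/-- A brace: an abelian group `(G, mul)` and a group `(G, circ)` with the compatibility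
`a ∘ (b · c) = (a ∘ b) · a⁻¹ · (a ∘ c)`. -/
structure IsBrace {G : Type*} (mul : G → G → G) (e : G) (inv : G → G)
    (circ : G → G → G) (ce : G) (cinv : G → G) : Prop where
  mul_group : IsGroup mul e inv
  mul_comm : ∀ a b, mul a b = mul b a
  circ_group : IsGroup circ ce cinv
  compat : ∀ a b c, circ a (mul b c) = mul (mul (circ a b) (inv a)) (circ a c)

/-- A homomorphism of braces preserves both operations. -/
def IsBraceHom {G H : Type*} (mulG circG : G → G → G) (mulH circH : H → H → H)
    (f : G → H) : Prop :=
  (∀ a b, f (mulG a b) = mulH (f a) (f b)) ∧ (∀ a b, f (circG a b) = circH (f a) (f b))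

/-- A brace automorphism: a bijective self-homomorphism. -/
def IsBraceAut {H : Type*} (mulH circH : H → H → H) (f : H → H) : Prop :=
  Function.Bijective f ∧ IsBraceHom mulH circH mulH circH f

/-- A semi-trivial action of the brace `G` on the brace `H`: each `Φ a` is a brace
automorphism of `H` and `Φ (a ∘ b) = Φ a ∘ Φ b`. -/
def IsSemiTrivialAction {G H : Type*} (circG : G → G → G)
    (mulH circH : H → H → H) (Φ : G → H → H) : Prop :=
  (∀ a, IsBraceAut mulH circH (Φ a)) ∧ (∀ a b h, Φ (circG a b) h = Φ a (Φ b h))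

/-- A relative Rota-Baxter operator on the brace `G` with respect to the semi-trivial
action `Φ` of `G` on `H`. -/
def IsRelRBO {G H : Type*} (mulG circG : G → G → G) (mulH circH : H → H → H)
    (Φ : G → H → H) (B : H → G) : Prop :=
  (∀ h k, mulG (B h) (B k) = B (mulH h k)) ∧
  (∀ h k, circG (B h) (B k) = B (circH h (Φ (B h) k)))

/-- An enhanced relative Rota-Baxter operator. -/
def IsEnhancedRelRBO {G H : Type*} (mulG circG : G → G → G) (mulH circH : H → H → H)
    (Φ : G → H → H) (B : H → G) : Prop :=
  (∀ h k, mulG (B h) (B k) = B (mulH h k)) ∧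
  (∀ (a : G) (h k : H), circG (mulG (B h) a) (B k)
      = mulG (B (circH h (Φ (mulG (B h) a) k))) a)

/-- A post-group: a group `(G, circ)` with an operation `tri` such that each left
multiplication `tri a` is an automorphism of `(G, circ)` and the weighted associativity
`(a ∘ (a ⊳ b)) ⊳ c = a ⊳ (b ⊳ c)` holds. -/
structure IsPostGroup {G : Type*} (circ : G → G → G) (ce : G) (cinv : G → G)
    (tri : G → G → G) : Prop where
  circ_group : IsGroup circ ce cinv
  tri_bij : ∀ a, Function.Bijective (tri a)
  tri_circ : ∀ a b c, tri a (circ b c) = circ (tri a b) (tri a c)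
  weighted : ∀ a b c, tri (circ a (tri a b)) c = tri a (tri b c)

/-- A post-brace: a brace `(G, mul, circ)` with `tri` making `(G, circ, tri)` a post-group
and `a ⊳ (b · c) = (a ⊳ b) · (a ⊳ c)`. -/
structure IsPostBrace {G : Type*} (mul : G → G → G) (e : G) (inv : G → G)
    (circ : G → G → G) (ce : G) (cinv : G → G) (tri : G → G → G) : Prop where
  brace : IsBrace mul e inv circ ce cinv
  post : IsPostGroup circ ce cinv tri
  tri_mul : ∀ a b c, tri a (mul b c) = mul (tri a b) (tri a c)

/-- A two-sided brace. -/
def IsTwoSidedBrace {G : Type*} (mul : G → G → G) (e : G) (inv : G → G)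
    (circ : G → G → G) (ce : G) (cinv : G → G) : Prop :=
  IsBrace mul e inv circ ce cinv ∧
  ∀ a b c, circ (mul a b) c = mul (mul (circ a c) (inv c)) (circ b c)

/-- The adjoint action of the `circ`-group: `Ad∘_a(b) = a ∘ b ∘ ā`. -/
def adC {G : Type*} (circ : G → G → G) (cinv : G → G) (a b : G) : G :=
  circ (circ a b) (cinv a)

/-- A Rota-Baxter operator on a two-sided brace (w.r.t. the adjoint semi-trivial action). -/
def IsRBTwoSided {G : Type*} (mul circ : G → G → G) (cinv : G → G) (B : G → G) : Prop :=
  (∀ a b, mul (B a) (B b) = B (mul a b)) ∧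
  (∀ a b, circ (B a) (B b) = B (circ a (adC circ cinv (B a) b)))

/-- An enhanced Rota-Baxter operator on a two-sided brace. -/
def IsEnhancedRBTwoSided {G : Type*} (mul circ : G → G → G) (cinv : G → G)
    (B : G → G) : Prop :=
  IsRBTwoSided mul circ cinv B ∧
  ∀ a b x, circ (mul (B a) x) (B b)
      = mul (B (circ a (adC circ cinv (mul (B a) x) b))) x

/-- `R × Id` on `X × X × X`. -/
def YB12 {X : Type*} (R : X × X → X × X) : X × X × X → X × X × X :=
  fun p => ((R (p.1, p.2.1)).1, (R (p.1, p.2.1)).2, p.2.2)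

/-- `Id × R` on `X × X × X`. -/
def YB23 {X : Type*} (R : X × X → X × X) : X × X × X → X × X × X :=
  fun p => (p.1, R p.2)

/-- A set-theoretical solution of the Yang-Baxter equation. -/
def IsYBSolution {X : Type*} (R : X × X → X × X) : Prop :=
  Function.Bijective R ∧
  YB12 R ∘ YB23 R ∘ YB12 R = YB23 R ∘ YB12 R ∘ YB23 R

/-- Non-degeneracy of a solution `R (a, b) = (φ_a b, ψ_b a)`. -/
def IsNonDegenerate {X : Type*} (R : X × X → X × X) : Prop :=
  (∀ a, Function.Bijective fun b => (R (a, b)).1) ∧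
  (∀ b, Function.Bijective fun a => (R (a, b)).2)

/-- Involutivity of a solution: `R ∘ R = Id`. -/
def IsInvolutiveSol {X : Type*} (R : X × X → X × X) : Prop :=
  ∀ p, R (R p) = p

/-- A matched pair of groups `(G, H, σ)` with `σ (a, h) = (r a h, l a h)`. -/
def IsMatchedPairOfGroups {G H : Type*} (opG : G → G → G) (eG : G)
    (opH : H → H → H) (eH : H) (r : G → H → H) (l : G → H → G) : Prop :=
  (∀ h, r eG h = h) ∧
  (∀ a b h, r a (r b h) = r (opG a b) h) ∧
  (∀ a b h, l (opG a b) h = opG (l a (r b h)) (l b h)) ∧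
  (∀ a, l a eH = a) ∧
  (∀ a h k, l (l a h) k = l a (opH h k)) ∧
  (∀ a h k, r a (opH h k) = opH (r a h) (r (l a h) k))

/-- A left ideal of the brace with multiplication `op` (with unit `u`) and second
operation `cop`: a subgroup of the `op`-group such that `p⁻¹ op (p cop x) ∈ S`
(expressed via the unique solution `r` of `op p r = cop p x`). -/
def IsLeftIdealOf {P : Type*} (op : P → P → P) (u : P) (cop : P → P → P)
    (S : Set P) : Prop :=
  u ∈ S ∧ (∀ p ∈ S, ∀ q ∈ S, op p q ∈ S) ∧
  (∀ p ∈ S, ∃ q ∈ S, op p q = u ∧ op q p = u) ∧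
  (∀ p : P, ∀ x ∈ S, ∀ r, op p r = cop p x → r ∈ S)

/-- `I` is an ideal of the sub-brace `S` of the ambient brace: a subgroup of `(S, mul)`,
normal in `(S, mul)` and in `(S, circ)`, and a left ideal of `S`. -/
def IsIdealOfSub {G : Type*} (mul : G → G → G) (e : G) (inv : G → G)
    (circ : G → G → G) (cinv : G → G) (S I : Set G) : Prop :=
  I ⊆ S ∧ e ∈ I ∧
  (∀ x ∈ I, ∀ y ∈ I, mul x y ∈ I) ∧ (∀ x ∈ I, inv x ∈ I) ∧
  (∀ s ∈ S, ∀ x ∈ I, mul (mul s x) (inv s) ∈ I) ∧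
  (∀ s ∈ S, ∀ x ∈ I, circ (circ s x) (cinv s) ∈ I) ∧
  (∀ s ∈ S, ∀ x ∈ I, mul (inv s) (circ s x) ∈ I)

/-- The bundled group structure, which makes Mathlib's group theory available for `op`. -/
abbrev IsGroup.toGroup {G : Type*} {op : G → G → G} {e : G} {inv : G → G}
    (h : IsGroup op e inv) : Group G where
  mul := op
  mul_assoc := h.assoc
  one := e
  one_mul := h.one_op
  mul_one := h.op_one
  inv := inv
  inv_mul_cancel := h.inv_op

theorem IsSemiTrivialAction.one_apply {G H : Type*} {circG : G → G → G} {ceG : G} {cinvG : G → G}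
    {mulH circH : H → H → H} {Φ : G → H → H} (hΦ : IsSemiTrivialAction circG mulH circH Φ)
    (hG : IsGroup circG ceG cinvG) (h : H) : Φ ceG h = h :=
  (hΦ.1 ceG).1.injective (by rw [← hΦ.2, hG.one_op])

section Group

variable {G H : Type*} [Group G] [Group H]

/-- The homomorphism `G →* MulAut H` given by an action `Φ` of `G` on `H` that is multiplicative
in `H`, as required to form Mathlib's semidirect product `H ⋊[φ] G`. -/
def mulAutOfAction (Φ : G → H → H) (one_apply : ∀ h, Φ 1 h = h)
    (mul_apply : ∀ a b h, Φ (a * b) h = Φ a (Φ b h))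
    (apply_mul : ∀ a h k, Φ a (h * k) = Φ a h * Φ a k) : G →* MulAut H :=
  letI : MulDistribMulAction G H :=
    { smul := Φ
      one_smul := one_apply
      mul_smul := mul_apply
      smul_mul := apply_mul
      smul_one := fun a => (MonoidHom.mk' (Φ a) (apply_mul a)).map_one }
  MulDistribMulAction.toMulAut G H

/-- A relative Rota-Baxter operator between groups, with respect to an action `φ` of `G` on `H`
by automorphisms; for `φ = 1` this is a homomorphism. -/
def IsGroupRelRBO (φ : G →* MulAut H) (B : H → G) : Prop :=
  ∀ h k, B h * B k = B (h * φ (B h) k)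

variable {φ : G →* MulAut H} {B : H → G}

theorem IsGroupRelRBO.map_one (hB : IsGroupRelRBO φ B) : B 1 = 1 := by
  simpa only [_root_.map_one, mul_one, mul_eq_left] using hB 1 1

theorem IsGroupRelRBO.inv_apply (hB : IsGroupRelRBO φ B) (h : H) :
    (B h)⁻¹ = B (φ (B h)⁻¹ h⁻¹) := by
  refine inv_eq_of_mul_eq_one_right ?_
  rw [hB, ← MulAut.mul_apply, ← map_mul, mul_inv_cancel, _root_.map_one, MulAut.one_apply,
    mul_inv_cancel, hB.map_one]

/-- The graph of a relative Rota-Baxter operator `B`, as a subgroup of the semidirect product. -/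
def IsGroupRelRBO.graph (hB : IsGroupRelRBO φ B) : Subgroup (H ⋊[φ] G) where
  carrier := {p | p.right = B p.left}
  one_mem' := hB.map_one.symm
  mul_mem' := by
    rintro ⟨h, _⟩ ⟨k, _⟩ (rfl : _ = B h) (rfl : _ = B k)
    exact hB h k
  inv_mem' := by
    rintro ⟨h, _⟩ (rfl : _ = B h)
    exact hB.inv_apply h

end Group

section IsGroup

variable {G H : Type*} {opG : G → G → G} {eG : G} {invG : G → G}
  {opH : H → H → H} {eH : H} {invH : H → H} {B : H → G}

theorem IsGroup.map_op_iff_graph (hG : IsGroup opG eG invG) (hH : IsGroup opH eH invH)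
    {Gr : Set (H × G)} (hGr : Gr = {p | p.2 = B p.1}) :
    (∀ h k, opG (B h) (B k) = B (opH h k)) ↔
      (eH, eG) ∈ Gr ∧
      (∀ p ∈ Gr, ∀ q ∈ Gr, (opH p.1 q.1, opG p.2 q.2) ∈ Gr) ∧
      (∀ p ∈ Gr, (invH p.1, invG p.2) ∈ Gr) := by
  subst hGr
  refine ⟨fun hB => ?_, fun ⟨_, hop, _⟩ h k => hop (h, B h) rfl (k, B k) rfl⟩
  let := hG.toGroup
  let := hH.toGroup
  have hB : IsGroupRelRBO (1 : G →* MulAut H) B := hB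
  exact ⟨hB.graph.one_mem,
    fun p hp q hq => hB.graph.mul_mem (x := ⟨p.1, p.2⟩) (y := ⟨q.1, q.2⟩) hp hq,
    fun p hp => hB.graph.inv_mem (x := ⟨p.1, p.2⟩) hp⟩

theorem IsGroup.relRBO_iff_graph (hG : IsGroup opG eG invG) (hH : IsGroup opH eH invH)
    {Φ : G → H → H} (one_apply : ∀ h, Φ eG h = h)
    (op_apply : ∀ a b h, Φ (opG a b) h = Φ a (Φ b h))
    (apply_op : ∀ a h k, Φ a (opH h k) = opH (Φ a h) (Φ a k))
    {Gr : Set (H × G)} (hGr : Gr = {p | p.2 = B p.1}) :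
    (∀ h k, opG (B h) (B k) = B (opH h (Φ (B h) k))) ↔
      (eH, eG) ∈ Gr ∧
      (∀ p ∈ Gr, ∀ q ∈ Gr, (opH p.1 (Φ p.2 q.1), opG p.2 q.2) ∈ Gr) ∧
      (∀ p ∈ Gr, ∃ q ∈ Gr,
        (opH p.1 (Φ p.2 q.1), opG p.2 q.2) = (eH, eG) ∧
        (opH q.1 (Φ q.2 p.1), opG q.2 p.2) = (eH, eG)) := by
  subst hGr
  refine ⟨fun hB => ?_, fun ⟨_, hop, _⟩ h k => hop (h, B h) rfl (k, B k) rfl⟩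
  let := hG.toGroup
  let := hH.toGroup
  let φ : G →* MulAut H := mulAutOfAction Φ one_apply op_apply apply_op
  have hB : IsGroupRelRBO φ B := hB
  refine ⟨hB.graph.one_mem,
    fun p hp q hq => hB.graph.mul_mem (x := ⟨p.1, p.2⟩) (y := ⟨q.1, q.2⟩) hp hq, fun p hp => ?_⟩
  let x : H ⋊[φ] G := ⟨p.1, p.2⟩
  have toProd {y z : H ⋊[φ] G} (hyz : y = z) : (y.left, y.right) = (z.left, z.right) := by
    rw [hyz]
  exact ⟨(x⁻¹.left, x⁻¹.right), hB.graph.inv_mem (x := x) hp,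
    toProd (mul_inv_cancel x), toProd (inv_mul_cancel x)⟩

end IsGroup

theorem statement2_general {G H : Type*}
    {mulG : G → G → G} {eG : G} {invG : G → G} {circG : G → G → G} {ceG : G} {cinvG : G → G}
    {mulH : H → H → H} {eH : H} {invH : H → H} {circH : H → H → H} {ceH : H} {cinvH : H → H}
    (hmulG : IsGroup mulG eG invG) (hcircG : IsGroup circG ceG cinvG)
    (hmulH : IsGroup mulH eH invH) (hcircH : IsGroup circH ceH cinvH)
    {Φ : G → H → H} (one_apply : ∀ h, Φ ceG h = h)
    (circ_apply : ∀ a b h, Φ (circG a b) h = Φ a (Φ b h))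
    (apply_circ : ∀ a h k, Φ a (circH h k) = circH (Φ a h) (Φ a k))
    {B : H → G} {Gr : Set (H × G)} (hGr : Gr = {p | p.2 = B p.1}) :
    IsRelRBO mulG circG mulH circH Φ B ↔
      ((eH, eG) ∈ Gr ∧ (ceH, ceG) ∈ Gr ∧
        (∀ p ∈ Gr, ∀ q ∈ Gr, (mulH p.1 q.1, mulG p.2 q.2) ∈ Gr) ∧
        (∀ p ∈ Gr, ∀ q ∈ Gr, (circH p.1 (Φ p.2 q.1), circG p.2 q.2) ∈ Gr) ∧
        (∀ p ∈ Gr, (invH p.1, invG p.2) ∈ Gr) ∧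
        (∀ p ∈ Gr, ∃ q ∈ Gr,
          (circH p.1 (Φ p.2 q.1), circG p.2 q.2) = (ceH, ceG) ∧
          (circH q.1 (Φ q.2 p.1), circG q.2 p.2) = (ceH, ceG))) := by
  rw [IsRelRBO, hmulG.map_op_iff_graph hmulH hGr,
    hcircG.relRBO_iff_graph hcircH one_apply circ_apply apply_circ hGr]
  tauto

/-- `B : H → G` is a relative Rota-Baxter operator iff its graph is a
sub-brace of the semi-direct product `H ⋊_Φ G` (closed under both multiplications and
both inversions, and containing the units). -/
theorem statement2 {G H : Type*}
    (mulG : G → G → G) (eG : G) (invG : G → G)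
    (circG : G → G → G) (ceG : G) (cinvG : G → G)
    (mulH : H → H → H) (eH : H) (invH : H → H)
    (circH : H → H → H) (ceH : H) (cinvH : H → H)
    (hG : IsBrace mulG eG invG circG ceG cinvG)
    (hH : IsBrace mulH eH invH circH ceH cinvH)
    (Φ : G → H → H) (hΦ : IsSemiTrivialAction circG mulH circH Φ)
    (B : H → G)
    (Gr : Set (H × G)) (hGr : Gr = {p : H × G | p.2 = B p.1}) :
    IsRelRBO mulG circG mulH circH Φ B ↔
      ((eH, eG) ∈ Gr ∧ (ceH, ceG) ∈ Gr ∧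
        (∀ p ∈ Gr, ∀ q ∈ Gr, (mulH p.1 q.1, mulG p.2 q.2) ∈ Gr) ∧
        (∀ p ∈ Gr, ∀ q ∈ Gr, (circH p.1 (Φ p.2 q.1), circG p.2 q.2) ∈ Gr) ∧
        (∀ p ∈ Gr, (invH p.1, invG p.2) ∈ Gr) ∧
        (∀ p ∈ Gr, ∃ q ∈ Gr,
          (circH p.1 (Φ p.2 q.1), circG p.2 q.2) = (ceH, ceG) ∧
          (circH q.1 (Φ q.2 p.1), circG q.2 p.2) = (ceH, ceG))) := by
  exact statement2_general hG.mul_group hG.circ_group hH.mul_group hH.circ_group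
    (hΦ.one_apply hG.circ_group) hΦ.2 (fun a => (hΦ.1 a).2.2) hGr
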